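/- Let n = 2m ≥ 2. For every 1 ≤ h ≤ n and every monomial x^a ∈ H(n), the map H_{Sq(x_h)}(x^a) : H(n) → H(n) is an inner derivation of H(n), where the p-power (x^a)^{[p]} used in H is x^a itself if x^a = x_i x_{i'} for some 1 ≤ i ≤ m, and 0 for all other monomials. (Hence each Sq(x_h) lies in the kernel of the Hochschild map H and defines a restricted cohomology class of H(n).) -/

import Mathlib

/-!
The squaring `Sq(x_h)` measures a deformation of the truncated polynomial algebra. Let `k` be the
index conjugate to `h`, and let `x_k ^ p = ε` with `ε ^ 2 = 0`, the other `p`-th powers staying zero.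
The `ε`-coefficient `epsCoeff` of a polynomial is its `p`-th Hasse derivative in `x_k`, reduced modulo
the truncation ideal, and the `ε`-coefficient of the deformed Poisson bracket of reduced polynomials
is, up to the scalar `σ(h) ^ p`, the cochain `Sq(x_h)` (`epsCoeff_poisson`, `SqE_DHH_tq`). Iterating
the bracket with `f = x ^ a` shows that the sum in the Hochschild operator is, up to that scalar, the
`ε`-coefficient of `D_f ^ p` (`sum_iterate_SqE`).

It remains to compute `D_f ^ p` on the untruncated polynomial ring. There `D_f` is the sum over the
conjugate pairs `(x_i, x_{i'})` of the derivations `∂_i f · ∂_{i'} - ∂_{i'} f · ∂_i`. For a monomial `f`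
these commute (`pairD_commute`), so `D_f ^ p` is the sum of their `p`-th powers
(`iterate_poisson_prime`). After clearing the denominator `x_i x_{i'}`, each of them becomes `f` times
a diagonal operator, whence its `p`-th power is zero if the exponents of `x_i` and `x_{i'}` in `f`
differ (`pairD_pow_eq_zero`), and is `c · (f / (x_i x_{i'})) ^ p · D_{x_i x_{i'}}` if both exponents are
equal to `c` (`pairD_pow_eq_mul`).

In the deformed algebra the `p`-th power of a monomial other than `1` is zero, or `ε` in the case of
`x_k` (`epsCoeff_monomial_pow_mul`). Hence, if `f` is none of the `x_i x_{i'}`, the Hochschild operator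
is the bracket with a linear combination of the `x_i x_{i'}` (`HOp_not_pair`), while for
`f = x_i x_{i'}` it is zero because `D_f ^ p = D_f` (`HOp_pair`). All this takes place in the algebra
with its constants; they are central, so dropping them at every step or only at the end gives the
same result (`HOp_Hbr`).
-/

set_option maxHeartbeats 1000000
set_option synthInstance.maxHeartbeats 400000

open scoped BigOperators
noncomputable section

variable (F : Type*) [Field F] (p n : ℕ)

/-- The ideal `(X_1^p, …, X_n^p)` of the polynomial ring. -/
def truncIdeal : Ideal (MvPolynomial (Fin n) F) :=
  Ideal.span (Set.range fun i : Fin n => MvPolynomial.X i ^ p)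

/-- The truncated polynomial algebra `A(n) = F[x_1,…,x_n]/(x_1^p,…,x_n^p)`. -/
abbrev TruncP := MvPolynomial (Fin n) F ⧸ truncIdeal F p n

/-- The monomial `x^a` in `A(n)`. -/
def xpow (a : Fin n → ℕ) : TruncP F p n :=
  Ideal.Quotient.mk _ (MvPolynomial.monomial (Finsupp.equivFunOnFinite.symm a) 1)

/-- Lift an `F`-linear map killing the truncation ideal to the quotient. -/
def liftF {N : Type*} [AddCommGroup N] [Module F N]
    (f : MvPolynomial (Fin n) F →ₗ[F] N)
    (h : (truncIdeal F p n).restrictScalars F ≤ LinearMap.ker f) :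
    TruncP F p n →ₗ[F] N :=
  (Submodule.liftQ ((truncIdeal F p n).restrictScalars F) f h) ∘ₗ
    (Submodule.Quotient.restrictScalarsEquiv F (truncIdeal F p n)).symm.toLinearMap

lemma liftF_mk {N : Type*} [AddCommGroup N] [Module F N]
    (f : MvPolynomial (Fin n) F →ₗ[F] N)
    (h : (truncIdeal F p n).restrictScalars F ≤ LinearMap.ker f)
    (x : MvPolynomial (Fin n) F) :
    liftF F p n f h (Ideal.Quotient.mk _ x) = f x := by
  simp only [liftF, LinearMap.coe_comp, Function.comp_apply, LinearEquiv.coe_coe]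
  have : (Ideal.Quotient.mk (truncIdeal F p n)) x = Submodule.Quotient.mk x := rfl
  rw [this, Submodule.Quotient.restrictScalarsEquiv_symm_mk, Submodule.liftQ_apply]

lemma truncIdeal_pderiv_mem [CharP F p] (j : Fin n) {f : MvPolynomial (Fin n) F}
    (hf : f ∈ truncIdeal F p n) :
    Ideal.Quotient.mk (truncIdeal F p n) (MvPolynomial.pderiv j f) = 0 := by
  classical
  let K : Ideal (MvPolynomial (Fin n) F) :=
    { carrier := {g | Ideal.Quotient.mk (truncIdeal F p n) (MvPolynomial.pderiv j g) = 0 ∧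
        Ideal.Quotient.mk (truncIdeal F p n) g = 0},
      add_mem' := by
        rintro a b ⟨ha1, ha2⟩ ⟨hb1, hb2⟩
        refine ⟨?_, ?_⟩
        · rw [map_add, map_add, ha1, hb1, add_zero]
        · rw [map_add, ha2, hb2, add_zero]
      zero_mem' := ⟨by rw [map_zero, map_zero], by rw [map_zero]⟩
      smul_mem' := by
        rintro c x ⟨hx1, hx2⟩
        refine ⟨?_, ?_⟩
        · have hL : MvPolynomial.pderiv j (c * x)
              = c * MvPolynomial.pderiv j x + x * MvPolynomial.pderiv j c := by
            have := (MvPolynomial.pderiv j).leibniz c x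
            simpa [smul_eq_mul, mul_comm] using this
          rw [smul_eq_mul, hL]
          rw [map_add, map_mul, map_mul, hx1, hx2, mul_zero, zero_mul, add_zero]
        · rw [smul_eq_mul, map_mul, hx2, mul_zero] }
  have hle : truncIdeal F p n ≤ K := by
    rw [truncIdeal, Ideal.span_le]
    rintro _ ⟨i, rfl⟩
    refine ⟨?_, ?_⟩
    · have hgen : MvPolynomial.pderiv j (MvPolynomial.X (R := F) i ^ p) = 0 := by
        rw [MvPolynomial.X_pow_eq_monomial, MvPolynomial.pderiv_monomial]
        rcases eq_or_ne i j with h | h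
        · subst h
          simp [Finsupp.single_apply, CharP.cast_eq_zero F p]
        · simp [Finsupp.single_apply, h]
      rw [hgen, map_zero]
    · exact Ideal.Quotient.eq_zero_iff_mem.mpr (Ideal.subset_span ⟨i, rfl⟩)
  exact (hle hf).1

lemma truncIdeal_support {f : MvPolynomial (Fin n) F} (hf : f ∈ truncIdeal F p n) :
    ∀ d ∈ f.support, ∃ i, p ≤ d i := by
  classical
  let K : Ideal (MvPolynomial (Fin n) F) :=
    { carrier := {g | ∀ d ∈ g.support, ∃ i, p ≤ d i},
      add_mem' := by
        intro a b ha hb d hd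
        rcases Finset.mem_union.mp (MvPolynomial.support_add hd) with h | h
        · exact ha d h
        · exact hb d h
      zero_mem' := by simp
      smul_mem' := by
        intro c x hx d hd
        rw [smul_eq_mul] at hd
        obtain ⟨d1, hd1, d2, hd2, rfl⟩ := Finset.mem_add.mp (MvPolynomial.support_mul c x hd)
        obtain ⟨i, hi⟩ := hx d2 hd2
        exact ⟨i, le_trans hi (by simp)⟩ }
  have hle : truncIdeal F p n ≤ K := by
    rw [truncIdeal, Ideal.span_le]
    rintro _ ⟨i, rfl⟩ d hd
    simp only [MvPolynomial.X_pow_eq_monomial] at hd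
    rw [MvPolynomial.support_monomial] at hd
    simp only [one_ne_zero, if_false] at hd
    rcases Finset.mem_singleton.mp hd with rfl
    exact ⟨i, by simp⟩
  exact hle hf

/-- The coefficient of `x^a` (for `a` componentwise `< p`) of an element of `A(n)`,
as a linear functional. For `a` not in the box this is defined to be `0`. -/
def coeffT (a : Fin n → ℕ) : TruncP F p n →ₗ[F] F :=
  if h : ∀ i, a i < p then
    liftF F p n
      { toFun := fun f => f.coeff (Finsupp.equivFunOnFinite.symm a),
        map_add' := fun f g => MvPolynomial.coeff_add _ f g,
        map_smul' := fun c f => MvPolynomial.coeff_smul _ c f }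
      (by
        intro f hf
        have hf' : f ∈ truncIdeal F p n := hf
        simp only [LinearMap.mem_ker, LinearMap.coe_mk, AddHom.coe_mk]
        by_contra hne
        have hmem : Finsupp.equivFunOnFinite.symm a ∈ f.support :=
          MvPolynomial.mem_support_iff.mpr hne
        obtain ⟨i, hi⟩ := truncIdeal_support F p n hf' _ hmem
        have heq : (Finsupp.equivFunOnFinite.symm a) i = a i := rfl
        have h2 := h i
        rw [heq] at hi
        omega)
  else 0

/-- The Jacobson–Witt algebra `W(n) = Der_F A(n)`. -/
abbrev Witt := Derivation F (TruncP F p n) (TruncP F p n)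

def DjL [CharP F p] (j : Fin n) : TruncP F p n →ₗ[F] TruncP F p n :=
  liftF F p n
    ((Ideal.Quotient.mkₐ F (truncIdeal F p n)).toLinearMap ∘ₗ (MvPolynomial.pderiv j).toLinearMap)
    (by
      intro f hf
      have hf' : f ∈ truncIdeal F p n := hf
      simp only [LinearMap.mem_ker, LinearMap.coe_comp, Function.comp_apply,
        AlgHom.toLinearMap_apply, Ideal.Quotient.mkₐ_eq_mk, Derivation.coeFn_coe]
      exact truncIdeal_pderiv_mem F p n j hf')

lemma DjL_mk [CharP F p] (j : Fin n) (f : MvPolynomial (Fin n) F) :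
    DjL F p n j (Ideal.Quotient.mk _ f) = Ideal.Quotient.mk _ (MvPolynomial.pderiv j f) := by
  rw [DjL, liftF_mk]
  simp

/-- The partial derivative `D_j = ∂/∂x_j`, as a derivation of `A(n)`. -/
def Dj [CharP F p] (j : Fin n) : Witt F p n where
  toLinearMap := DjL F p n j
  map_one_eq_zero' := by
    have h1 : (1 : TruncP F p n) = Ideal.Quotient.mk _ (1 : MvPolynomial (Fin n) F) :=
      (map_one _).symm
    rw [LinearMap.coe_mk] at *
    show DjL F p n j 1 = 0
    rw [h1, DjL_mk]
    simp
  leibniz' := by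
    intro a b
    obtain ⟨x, rfl⟩ := Ideal.Quotient.mk_surjective a
    obtain ⟨y, rfl⟩ := Ideal.Quotient.mk_surjective b
    show DjL F p n j _ = _ • DjL F p n j _ + _ • DjL F p n j _
    rw [← map_mul, DjL_mk, DjL_mk, DjL_mk, smul_eq_mul, smul_eq_mul, ← map_mul, ← map_mul,
      ← map_add]
    congr 1
    have := (MvPolynomial.pderiv j).leibniz x y
    simpa [smul_eq_mul] using this
section Cochains

variable (F : Type*) [Field F] {L : Type*} [AddCommGroup L] [Module F L]

/-- A map of two arguments which is `F`-linear in each argument. -/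
def IsBilinear (ψ : L → L → L) : Prop :=
  (∀ x, IsLinearMap F (ψ x)) ∧ ∀ y, IsLinearMap F fun x => ψ x y

/-- A 2-cochain with adjoint coefficients: an alternating `F`-bilinear map. -/
def IsCochain (ψ : L → L → L) : Prop :=
  IsBilinear F ψ ∧ ∀ x, ψ x x = 0

/-- A 2-cocycle with adjoint coefficients, for the bracket `B`. -/
def IsCocycle (B : L → L → L) (ψ : L → L → L) : Prop :=
  IsCochain F ψ ∧ ∀ x y z,
    B x (ψ y z) - B y (ψ x z) + B z (ψ x y)
      - ψ (B x y) z + ψ (B x z) y - ψ (B y z) x = 0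

/-- A 2-coboundary with adjoint coefficients, for the bracket `B`. -/
def IsCoboundary (B : L → L → L) (ψ : L → L → L) : Prop :=
  ∃ φ : L →ₗ[F] L, ∀ x y, ψ x y = B x (φ y) - B y (φ x) - φ (B x y)

/-- A 2-cocycle of a subspace `V` (closed under the bracket `B` of the ambient space),
with adjoint coefficients.  The cochain is recorded as an everywhere-defined bilinear
map preserving `V`; only its restriction to `V` is relevant. -/
def IsCocycleOn (V : Submodule F L) (B : L → L → L) (ψ : L → L → L) : Prop :=
  IsBilinear F ψ ∧ (∀ x ∈ V, ∀ y ∈ V, ψ x y ∈ V) ∧ (∀ x ∈ V, ψ x x = 0) ∧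
    ∀ x ∈ V, ∀ y ∈ V, ∀ z ∈ V,
      B x (ψ y z) - B y (ψ x z) + B z (ψ x y)
        - ψ (B x y) z + ψ (B x z) y - ψ (B y z) x = 0

/-- A 2-coboundary of a subspace `V`, with adjoint coefficients. -/
def IsCoboundaryOn (V : Submodule F L) (B : L → L → L) (ψ : L → L → L) : Prop :=
  ∃ φ : L →ₗ[F] L, (∀ x ∈ V, φ x ∈ V) ∧
    ∀ x ∈ V, ∀ y ∈ V, ψ x y = B x (φ y) - B y (φ x) - φ (B x y)

/-- A derivation of a subspace `V` closed under the bracket `B`: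
an `F`-linear map preserving `V` and satisfying the Leibniz rule on `V`. -/
def IsDerivationOn (V : Submodule F L) (B : L → L → L) (γ : L →ₗ[F] L) : Prop :=
  (∀ x ∈ V, γ x ∈ V) ∧ ∀ x ∈ V, ∀ y ∈ V, γ (B x y) = B (γ x) y + B x (γ y)

/-- An inner derivation of a subspace `V`: a map agreeing on `V` with `ad z = B z ·`
for some `z ∈ V`. -/
def IsInnerOn (V : Submodule F L) (B : L → L → L) (δ : L → L) : Prop :=
  ∃ z ∈ V, ∀ y ∈ V, δ y = B z y

/-- An inner derivation: `δ = ad z = B z ·` for some `z`. -/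
def IsInner (B : L → L → L) (δ : L → L) : Prop := ∃ z, ∀ y, δ y = B z y

/-- The squaring `Sq(γ)(x,y) = ∑_{i=1}^{p-1} [γ^i(x), γ^{p-i}(y)]/(i!·(p-i)!)`
of an operator `γ`, relative to the bracket `B`. -/
def Squaring (p : ℕ) (B : L → L → L) (γ : L → L) : L → L → L := fun x y =>
  ∑ i ∈ Finset.Ioo 0 p,
    (((Nat.factorial i * Nat.factorial (p - i) : ℕ) : F))⁻¹ • B (γ^[i] x) (γ^[p - i] y)

/-- `Sq(z) := Sq(ad z)` for an element `z`. -/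
def SqE (p : ℕ) (B : L → L → L) (z : L) : L → L → L :=
  Squaring F p B (fun y => B z y)

/-- The Hochschild operator
`H_ψ(x)(y) = ∑_{j=0}^{p-1} (ad x)^j (ψ(x, (ad x)^{p-1-j}(y))) − ψ(x^{[p]}, y)`,
for the bracket `B`, the 2-cochain `ψ`, and the chosen `p`-th power `xp` of `x`. -/
def HOp (p : ℕ) (B : L → L → L) (ψ : L → L → L) (x xp : L) : L → L := fun y =>
  (∑ j ∈ Finset.range p, (fun z => B x z)^[j] (ψ x ((fun z => B x z)^[p - 1 - j] y)))
    - ψ xp y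

end Cochains

section Symplectic

variable (F : Type*) [Field F] (m : ℕ)

/-- The sign `σ(j)` for `1 ≤ j ≤ 2m`: `1` if `j ≤ m` and `−1` if `j > m`. -/
def sg (j : Fin (2 * m)) : F := if (j : ℕ) < m then 1 else -1

/-- The conjugate index `j' = j ± m`. -/
def cj (j : Fin (2 * m)) : Fin (2 * m) :=
  if h : (j : ℕ) < m then ⟨(j : ℕ) + m, by omega⟩
  else ⟨(j : ℕ) - m, by have := j.isLt; omega⟩

end Symplectic

section Hamiltonian

variable (F : Type*) [Field F] (p m : ℕ) [CharP F p]

/-- The Poisson operator `D_H(f)(g) = ∑_{j=1}^{2m} σ(j)·D_j(f)·D_{j'}(g)` on `A(2m)`. -/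
def DHH (f g : TruncP F p (2 * m)) : TruncP F p (2 * m) :=
  ∑ j : Fin (2 * m), sg F m j • (Dj F p (2 * m) j f * Dj F p (2 * m) (cj m j) g)

/-- The bracket of the Hamiltonian algebra: the Poisson bracket `D_H(f)(g)` with its
constant term removed (realizing the quotient by the central element `1` on the span
of the non-constant monomials). -/
def Hbr (f g : TruncP F p (2 * m)) : TruncP F p (2 * m) :=
  DHH F p m f g - coeffT F p (2 * m) (fun _ => 0) (DHH F p m f g) • (1 : TruncP F p (2 * m))

/-- The Hamiltonian algebra `H(n)`, `n = 2m`: the span of the monomials `x^a` with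
`x^a ≠ 1, x^τ`. -/
def Hsub : Submodule F (TruncP F p (2 * m)) :=
  Submodule.span F
    {f | ∃ a : Fin (2 * m) → ℕ,
      (∀ i, a i < p) ∧ a ≠ (fun _ => 0) ∧ a ≠ (fun _ => p - 1) ∧ f = xpow F p (2 * m) a}

open scoped Classical in
/-- The `[p]`-th power of the monomial `x^a` in `H(n)`: `x^a` itself if
`x^a = x_i x_{i'}` for some `1 ≤ i ≤ m`, and `0` otherwise. -/
noncomputable def HpPow (a : Fin (2 * m) → ℕ) : TruncP F p (2 * m) :=
  if ∃ i : Fin (2 * m), (i : ℕ) < m ∧ a = Pi.single i 1 + Pi.single (cj m i) 1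
  then xpow F p (2 * m) a else 0

/-- The characterization of the cocycle `Φ` of `H(n)`: the alternating bilinear map
with `Φ(x^a, x^b) = ∑_{|δ|=3, δ≤a, δ̂≤b} binom(a,δ)·binom(b,δ̂)·σ(δ)·δ!·x^{a+b−δ−δ̂}`
on monomials. -/
def IsPhiH (Φ : TruncP F p (2 * m) → TruncP F p (2 * m) → TruncP F p (2 * m)) : Prop :=
  IsBilinear F Φ ∧ (∀ x, Φ x x = 0) ∧
    ∀ a b : Fin (2 * m) → ℕ, (∀ i, a i < p) → (∀ i, b i < p) →
      Φ (xpow F p (2 * m) a) (xpow F p (2 * m) b) =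
        ∑ d : Fin (2 * m) → Fin 4,
          if (∑ i, (d i : ℕ)) = 3 ∧ (∀ i, (d i : ℕ) ≤ a i) ∧ (∀ i, (d (cj m i) : ℕ) ≤ b i)
          then ((∏ i, (((a i).choose (d i) : ℕ) : F)) *
                (∏ i, (((b i).choose (d (cj m i)) : ℕ) : F)) *
                (∏ i, sg F m i ^ (d i : ℕ)) *
                (∏ i, (((d i : ℕ).factorial : ℕ) : F))) •
              xpow F p (2 * m)
                (a + b - (fun i => (d i : ℕ)) - (fun i => (d (cj m i) : ℕ)))
          else 0

end Hamiltonian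

/-! ### One conjugate pair of variables -/

section PairCalculus

open MvPolynomial

variable {F : Type*} [Field F] {ι : Type*}

/-- The contribution `∂_x f · ∂_y − ∂_y f · ∂_x` of one conjugate pair `(x, y)` of variables to the
Hamiltonian derivation of `f`, on the untruncated polynomial ring. -/
def pairD (x y : ι) (f : MvPolynomial ι F) : Derivation F (MvPolynomial ι F) (MvPolynomial ι F) :=
  pderiv x f • pderiv y - pderiv y f • pderiv x

/-- The diagonal derivation `A x • Y∂_Y − A y • X∂_X`, a rescaling of `pairD x y` of the monomial with
exponent `A`: clearing the denominator `X x * X y` turns the latter into `monomial A 1 • pairE x y A`;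
see `X_mul_X_mul_pairD`. -/
def pairE (x y : ι) (A : ι →₀ ℕ) : Derivation F (MvPolynomial ι F) (MvPolynomial ι F) :=
  ((A x : MvPolynomial ι F) * X y) • pderiv y - ((A y : MvPolynomial ι F) * X x) • pderiv x

/-- The eigenvalue of `pairE x y A` on the monomial with exponent `B`. -/
def pairW (x y : ι) (A B : ι →₀ ℕ) : ℤ := A x * B y - A y * B x

lemma pairD_apply (x y : ι) (f g : MvPolynomial ι F) :
    pairD x y f g = pderiv x f * pderiv y g - pderiv y f * pderiv x g := by
  simp [pairD]

lemma pairE_apply (x y : ι) (A : ι →₀ ℕ) (g : MvPolynomial ι F) :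
    pairE x y A g = (A x : MvPolynomial ι F) * X y * pderiv y g - (A y : MvPolynomial ι F) * X x * pderiv x g := by
  simp [pairE]

lemma X_mul_X_mul_pairD (x y : ι) (A : ι →₀ ℕ) (g : MvPolynomial ι F) :
    X x * X y * pairD x y (monomial A 1) g = monomial A 1 * pairE x y A g := by
  have hx := X_mul_pderiv_monomial (R := F) (i := x) (m := A) (r := 1)
  have hy := X_mul_pderiv_monomial (R := F) (i := y) (m := A) (r := 1)
  rw [nsmul_eq_mul] at hx hy
  rw [pairD_apply, pairE_apply]
  linear_combination (X y * pderiv y g) * hx - (X x * pderiv x g) * hy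

lemma pairE_monomial (x y : ι) (A B : ι →₀ ℕ) :
    pairE x y A (monomial B (1 : F)) = (pairW x y A B : MvPolynomial ι F) * monomial B 1 := by
  have hx := X_mul_pderiv_monomial (R := F) (i := x) (m := B) (r := 1)
  have hy := X_mul_pderiv_monomial (R := F) (i := y) (m := B) (r := 1)
  rw [nsmul_eq_mul] at hx hy
  rw [pairE_apply, pairW]
  push_cast
  linear_combination (A x : MvPolynomial ι F) * hy - (A y : MvPolynomial ι F) * hx

lemma pairE_self (x y : ι) (A : ι →₀ ℕ) : pairE x y A (monomial A (1 : F)) = 0 := by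
  rw [pairE_monomial, pairW, mul_comm, sub_eq_zero.2 (mul_comm _ _)]; simp

lemma pairE_X_mul_X {x y : ι} (hxy : x ≠ y) (A : ι →₀ ℕ) :
    pairE x y A (X x * X y : MvPolynomial ι F) =
      ((A x - A y : ℤ) : MvPolynomial ι F) * (X x * X y) := by
  rw [pairE_apply, Derivation.leibniz, Derivation.leibniz]
  simp only [pderiv_X_self, pderiv_X_of_ne hxy, pderiv_X_of_ne hxy.symm, smul_eq_mul]
  push_cast
  ring

/-- Clearing denominators in the iterates of `pairD` on a monomial. The eigenvalue `pairW` drops by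
`A x - A y` at every step: passing to the next iterate multiplies the monomial by
`monomial A 1 / (X x * X y)`, of which `monomial A 1` has eigenvalue `0` and `X x * X y` has
eigenvalue `A x - A y`. -/
lemma pow_mul_iterate_pairD {x y : ι} (hxy : x ≠ y) (A B : ι →₀ ℕ) (r : ℕ) :
    (X x * X y) ^ r * (pairD x y (monomial A (1 : F)))^[r] (monomial B 1) =
      monomial A 1 ^ r *
        ((∏ k ∈ Finset.range r, (pairW x y A B - k * (A x - A y)) : ℤ) : MvPolynomial ι F) *
        monomial B 1 := by
  induction r with
  | zero => simp
  | succ r ih =>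
    rw [Function.iterate_succ_apply', pow_succ, mul_assoc, X_mul_X_mul_pairD]
    set w := (pairD x y (monomial A (1 : F)))^[r] (monomial B 1)
    have hE := congrArg (pairE x y A) ih
    simp only [Derivation.leibniz, Derivation.leibniz_pow, pairE_X_mul_X hxy, pairE_self,
      pairE_monomial, Derivation.map_intCast, smul_eq_mul, smul_zero, mul_zero,
      add_zero] at hE
    have hpow : (X x * X y : MvPolynomial ι F) ^ (r - 1) * ((r : MvPolynomial ι F) * (X x * X y)) =
        (r : MvPolynomial ι F) * (X x * X y) ^ r := by
      rcases r with _ | r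
      · simp
      · simp only [Nat.add_sub_cancel]; ring
    have key : (X x * X y) ^ r * pairE x y A w =
        monomial A 1 ^ r * ((∏ k ∈ Finset.range r, (pairW x y A B - k * (A x - A y)) : ℤ) :
          MvPolynomial ι F) * ((pairW x y A B - r * (A x - A y) : ℤ) :
          MvPolynomial ι F) * monomial B 1 := by
      simp only [nsmul_eq_mul] at hE
      push_cast at hE ih hpow ⊢
      linear_combination hE - (r : MvPolynomial ι F) * (A x - A y) * ih - w * (A x - A y) * hpow
    rw [Finset.prod_range_succ, pow_succ]
    push_cast at key ⊢
    linear_combination monomial A (1 : F) * key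

/-- Modulo `p` the factors run through all residues, so one of them vanishes. -/
lemma prod_sub_mul_eq_zero (p : ℕ) [Fact p.Prime] [CharP F p] (l w : ℤ) (hw : (w : F) ≠ 0) :
    ((∏ k ∈ Finset.range p, (l - k * w) : ℤ) : F) = 0 := by
  have hw' : (w : ZMod p) ≠ 0 := by
    rw [Ne, ZMod.intCast_zmod_eq_zero_iff_dvd]
    rwa [Ne, CharP.intCast_eq_zero_iff F p] at hw
  rw [CharP.intCast_eq_zero_iff F p, ← ZMod.intCast_zmod_eq_zero_iff_dvd]
  push_cast
  refine Finset.prod_eq_zero (i := ((l : ZMod p) / w).val) ?_ ?_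
  · exact Finset.mem_range.2 (ZMod.val_lt _)
  · rw [ZMod.natCast_zmod_val, div_mul_cancel₀ _ hw', sub_self]

lemma iterate_pairD_eq_zero (p : ℕ) [Fact p.Prime] [CharP F p] {x y : ι} (hxy : x ≠ y)
    {A : ι →₀ ℕ} (hx : A x < p) (hy : A y < p) (h : A x ≠ A y) (B : ι →₀ ℕ) :
    (pairD x y (monomial A (1 : F)))^[p] (monomial B 1) = 0 := by
  have key := pow_mul_iterate_pairD (F := F) hxy A B p
  have h0 : ((A x - A y : ℤ) : F) ≠ 0 := by
    push_cast
    rw [sub_ne_zero]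
    exact fun h' => h (CharP.natCast_injOn_Iio F p hx hy h')
  rw [← map_intCast (C : F →+* MvPolynomial ι F), prod_sub_mul_eq_zero p _ _ h0] at key
  have hX : (X x * X y : MvPolynomial ι F) ^ p ≠ 0 :=
    pow_ne_zero _ (mul_ne_zero (X_ne_zero _) (X_ne_zero _))
  simpa [hX, X_ne_zero] using key

lemma iterate_pairD_eq_mul (p : ℕ) [Fact p.Prime] [CharP F p] {x y : ι} (hxy : x ≠ y)
    {A : ι →₀ ℕ} (h : A x = A y) (B : ι →₀ ℕ) :
    (pairD x y (monomial A (1 : F)))^[p] (monomial B 1) =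
      (A x : MvPolynomial ι F) * (monomial (A - (Finsupp.single x 1 + Finsupp.single y 1)) 1 ^ p *
        pairD x y (X x * X y) (monomial B 1)) := by
  -- If both exponents vanish, there is no denominator to clear and the derivation is zero.
  rcases Nat.eq_zero_or_pos (A x) with h0 | h1
  · obtain ⟨r, hr⟩ : ∃ r, p = r + 1 := ⟨p - 1, by have := (Fact.out : p.Prime).pos; omega⟩
    have : pderiv x (monomial A (1 : F)) = 0 ∧ pderiv y (monomial A (1 : F)) = 0 := by
      simp [pderiv_monomial, ← h, h0]
    rw [h0, hr, Function.iterate_succ_apply', pairD_apply, this.1, this.2]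
    simp
  have key := pow_mul_iterate_pairD (F := F) hxy A B p
  set T : MvPolynomial ι F := X x * X y with hT
  have hX : T ^ p ≠ 0 :=
    pow_ne_zero _ (mul_ne_zero (X_ne_zero _) (X_ne_zero _))
  have hA : monomial A (1 : F) =
      T * monomial (A - (Finsupp.single x 1 + Finsupp.single y 1)) 1 := by
    rw [hT, X, X, monomial_mul, monomial_mul, add_tsub_cancel_of_le]
    · simp
    · intro j
      classical
      simp only [Finsupp.add_apply, Finsupp.single_apply]
      split_ifs with h2 h3 h3
      · exact absurd (h2.trans h3.symm) hxy
      · subst h2; omega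
      · subst h3; omega
      · omega
  -- Fermat: integers are fixed by the Frobenius.
  have hfr : ((∏ k ∈ Finset.range p, (pairW x y A B - k * (A x - A y)) : ℤ) : MvPolynomial ι F)
      = (pairW x y A B : MvPolynomial ι F) := by
    simp only [h, sub_self, mul_zero, sub_zero, Finset.prod_const, Finset.card_range]
    rw [Int.cast_pow]
    exact map_intCast (frobenius (MvPolynomial ι F) p) _
  have hE : (pairW x y A B : MvPolynomial ι F) * monomial B 1 =
      (A x : MvPolynomial ι F) * pairD x y T (monomial B 1) := by
    rw [← pairE_monomial, pairE_apply, pairD_apply, hT, Derivation.leibniz, Derivation.leibniz]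
    simp only [pderiv_X_self, pderiv_X_of_ne hxy, pderiv_X_of_ne hxy.symm, smul_eq_mul, ← h]
    ring
  refine mul_left_cancel₀ hX ?_
  rw [key, hfr, mul_assoc, hE, hA, mul_pow]
  ring

lemma pairD_pow_eq_zero (p : ℕ) [Fact p.Prime] [CharP F p] {x y : ι} (hxy : x ≠ y)
    {A : ι →₀ ℕ} (hx : A x < p) (hy : A y < p) (h : A x ≠ A y) (v : MvPolynomial ι F) :
    ((pairD x y (monomial A (1 : F)) : Module.End F (MvPolynomial ι F)) ^ p) v = 0 := by
  suffices H : (pairD x y (monomial A (1 : F)) : Module.End F (MvPolynomial ι F)) ^ p = 0 by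
    rw [H, LinearMap.zero_apply]
  refine (basisMonomials ι F).ext fun B => ?_
  rw [coe_basisMonomials, Module.End.pow_apply]
  exact iterate_pairD_eq_zero p hxy hx hy h B

/-- The `p`-th power of a pair derivation whose two exponents agree; for the product `X x * X y`
this says that the derivation is toral. -/
lemma pairD_pow_eq_mul (p : ℕ) [Fact p.Prime] [CharP F p] {x y : ι} (hxy : x ≠ y)
    {A : ι →₀ ℕ} (h : A x = A y) (v : MvPolynomial ι F) :
    ((pairD x y (monomial A (1 : F)) : Module.End F (MvPolynomial ι F)) ^ p) v =
      (A x : F) • (monomial (A - (Finsupp.single x 1 + Finsupp.single y 1)) 1 ^ p *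
        pairD x y (X x * X y) v) := by
  suffices H : (pairD x y (monomial A (1 : F)) : Module.End F (MvPolynomial ι F)) ^ p =
      (A x : F) • (LinearMap.mulLeft F
        (monomial (A - (Finsupp.single x 1 + Finsupp.single y 1)) 1 ^ p) ∘ₗ
          (pairD x y (X x * X y : MvPolynomial ι F) : Module.End F (MvPolynomial ι F))) by
    rw [H]; rfl
  refine (basisMonomials ι F).ext fun B => ?_
  rw [coe_basisMonomials, Module.End.pow_apply]
  refine (iterate_pairD_eq_mul p hxy h B).trans ?_
  rw [← map_natCast (C : F →+* MvPolynomial ι F), C_mul']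
  rfl

/-- The product of two pair derivations of disjoint pairs, with denominators cleared, is symmetric
in the two pairs. -/
lemma mul_pairD_pairD {x y x' y' : ι} (hx : x ≠ x') (hx' : x ≠ y') (hy : y ≠ x') (hy' : y ≠ y')
    (A B : ι →₀ ℕ) :
    (X x * X y) * (X x' * X y') *
        pairD x y (monomial A 1) (pairD x' y' (monomial A 1) (monomial B (1 : F))) =
      monomial A 1 * (monomial A 1 * ((pairW x y A B : MvPolynomial ι F) *
        ((pairW x' y' A B : MvPolynomial ι F) * monomial B 1))) := by
  have hT : pairE x y A (X x' * X y' : MvPolynomial ι F) = 0 := by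
    rw [pairE_apply, Derivation.leibniz, Derivation.leibniz]
    simp [pderiv_X_of_ne hx.symm, pderiv_X_of_ne hx'.symm, pderiv_X_of_ne hy.symm,
      pderiv_X_of_ne hy'.symm]
  have h := congrArg (pairE x y A) (X_mul_X_mul_pairD x' y' A (monomial B (1 : F)))
  rw [pairE_monomial, Derivation.leibniz _ (X x' * X y'), hT, Derivation.leibniz _ (monomial A 1),
    Derivation.leibniz _ (Int.cast _), pairE_self, pairE_monomial, Derivation.map_intCast] at h
  have h2 := X_mul_X_mul_pairD x y A (pairD x' y' (monomial A 1) (monomial B (1 : F)))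
  simp only [smul_eq_mul, mul_zero, add_zero] at h
  linear_combination (X x' * X y') * h2 + monomial A (1 : F) * h

/-- Disjoint pairs give commuting derivations. -/
lemma pairD_commute {x y x' y' : ι} (hx : x ≠ x') (hx' : x ≠ y') (hy : y ≠ x') (hy' : y ≠ y')
    (A : ι →₀ ℕ) :
    Commute (pairD x y (monomial A (1 : F)) : Module.End F (MvPolynomial ι F))
      (pairD x' y' (monomial A (1 : F)) : Module.End F (MvPolynomial ι F)) := by
  refine (basisMonomials ι F).ext fun B => ?_
  rw [coe_basisMonomials]
  have hX : (X x * X y) * (X x' * X y') ≠ (0 : MvPolynomial ι F) :=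
    mul_ne_zero (mul_ne_zero (X_ne_zero _) (X_ne_zero _))
      (mul_ne_zero (X_ne_zero _) (X_ne_zero _))
  refine mul_left_cancel₀ hX ?_
  have h1 := mul_pairD_pairD (F := F) hx hx' hy hy' A B
  have h2 := mul_pairD_pairD (F := F) hx.symm hy.symm hx'.symm hy'.symm A B
  simp only [Module.End.mul_apply, Derivation.coeFn_coe]
  linear_combination h1 - h2

lemma sum_pow_char_of_commute {R κ : Type*} [Ring R] (p : ℕ) [Fact p.Prime] [CharP R p]
    (s : Finset κ) (f : κ → R) (h : ∀ i ∈ s, ∀ j ∈ s, Commute (f i) (f j)) :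
    (∑ i ∈ s, f i) ^ p = ∑ i ∈ s, f i ^ p := by
  classical
  induction s using Finset.induction_on with
  | empty => simp [(Fact.out : p.Prime).ne_zero]
  | insert a s ha ih =>
    rw [Finset.sum_insert ha, Finset.sum_insert ha, add_pow_char_of_commute,
      ih fun i hi j hj => h i (Finset.mem_insert_of_mem hi) j (Finset.mem_insert_of_mem hj)]
    exact Commute.sum_right _ _ _ fun j hj =>
      h a (Finset.mem_insert_self _ _) j (Finset.mem_insert_of_mem hj)

end PairCalculus

/-! ### Hasse derivatives -/

section Taylor

open MvPolynomial

variable {F : Type*} [Field F] {ι : Type*} [DecidableEq ι]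

/-- The substitution `x_k ↦ x_k + T`, whose coefficient of `T ^ i` is the `i`-th Hasse (divided)
derivative in the variable `x_k`. -/
def taylorAt (k : ι) : MvPolynomial ι F →ₐ[F] Polynomial (MvPolynomial ι F) :=
  aeval fun l => Polynomial.C (X l) + if l = k then Polynomial.X else 0

/-- The `i`-th Hasse derivative `∂_k ^ i / i!`. -/
def hasse (k : ι) (i : ℕ) (u : MvPolynomial ι F) : MvPolynomial ι F := (taylorAt k u).coeff i

lemma taylorAt_C (k : ι) (c : F) : taylorAt k (C c) = Polynomial.C (C c : MvPolynomial ι F) := by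
  rw [taylorAt, aeval_C]; rfl

lemma taylorAt_X (k l : ι) : taylorAt k (X l : MvPolynomial ι F) =
    Polynomial.C (X l) + if l = k then Polynomial.X else 0 := by
  rw [taylorAt, aeval_X]

lemma hasse_add (k : ι) (i : ℕ) (u v : MvPolynomial ι F) :
    hasse k i (u + v) = hasse k i u + hasse k i v := by
  simp [hasse]

lemma hasse_smul (k : ι) (i : ℕ) (c : F) (u : MvPolynomial ι F) :
    hasse k i (c • u) = c • hasse k i u := by
  simp [hasse]

lemma hasse_sum {κ : Type*} (k : ι) (i : ℕ) (s : Finset κ) (u : κ → MvPolynomial ι F) :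
    hasse k i (∑ j ∈ s, u j) = ∑ j ∈ s, hasse k i (u j) := by
  simp [hasse]

lemma hasse_zero (k : ι) (u : MvPolynomial ι F) : hasse k 0 u = u := by
  unfold hasse
  induction u using MvPolynomial.induction_on with
  | C a => simp
  | add p q hp hq => simp [hp, hq]
  | mul_X p l hp => rw [map_mul, Polynomial.mul_coeff_zero, hp, taylorAt_X]; split_ifs <;> simp

lemma hasse_mul (k : ι) (i : ℕ) (u v : MvPolynomial ι F) :
    hasse k i (u * v) = ∑ a ∈ Finset.HasAntidiagonal.antidiagonal i, hasse k a.1 u * hasse k a.2 v := by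
  simp [hasse, Polynomial.coeff_mul]

lemma pderiv_hasse (k j : ι) (i : ℕ) (u : MvPolynomial ι F) :
    pderiv j (hasse k i u) = hasse k i (pderiv j u) := by
  unfold hasse
  induction u using MvPolynomial.induction_on generalizing i with
  | C a => simp [Polynomial.coeff_C, apply_ite (pderiv j)]
  | add p q hp hq => simp [hp, hq]
  | mul_X p l hp =>
    have hX : taylorAt k (pderiv j (X l : MvPolynomial ι F)) =
        Polynomial.C (pderiv j (X l)) := by
      by_cases h : l = j
      · subst h; simp
      · simp [pderiv_X_of_ne h]
    rw [Derivation.leibniz, smul_eq_mul, smul_eq_mul, map_add, map_mul, map_mul, map_mul, hX,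
      taylorAt_X]
    split_ifs
    · rcases i with _ | i
      · simp [hp, mul_add, add_mul]
      · simp [hp, mul_add, add_mul, Polynomial.coeff_X_mul]; ring
    · simp [hp]

lemma derivative_taylorAt (k : ι) (u : MvPolynomial ι F) :
    Polynomial.derivative (taylorAt k u) = taylorAt k (pderiv k u) := by
  induction u using MvPolynomial.induction_on with
  | C a => simp
  | add p q hp hq => simp [hp, hq]
  | mul_X p l hp =>
    rw [map_mul, Polynomial.derivative_mul, hp, taylorAt_X]
    by_cases h : l = k
    · subst h; simp [taylorAt_X]; ring
    · simp [h, pderiv_X_of_ne h, taylorAt_X]; ring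

lemma hasse_succ (k : ι) (i : ℕ) (u : MvPolynomial ι F) :
    pderiv k (hasse k i u) = ((i + 1 : ℕ) : F) • hasse k (i + 1) u := by
  rw [pderiv_hasse]
  unfold hasse
  rw [← derivative_taylorAt, Polynomial.coeff_derivative, Algebra.smul_def]
  push_cast
  rw [mul_comm]

lemma factorial_smul_hasse (k : ι) (i : ℕ) (u : MvPolynomial ι F) :
    ((Nat.factorial i : ℕ) : F) • hasse k i u = (pderiv k)^[i] u := by
  induction i with
  | zero => simp [hasse_zero]
  | succ i ih =>
    rw [Function.iterate_succ_apply', ← ih, Derivation.map_smul, hasse_succ, smul_smul,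
      Nat.factorial_succ, mul_comm]
    push_cast; ring_nf

/-- `x_l ^ p` is a constant for all Hasse derivatives of order `1, …, p - 1`, and the one of order
`p` in the variable `x_l` sends it to `1`. -/
lemma hasse_X_pow_mul (p : ℕ) [Fact p.Prime] [CharP F p] (k l : ι) (u : MvPolynomial ι F) :
    hasse k p (X l ^ p * u) = X l ^ p * hasse k p u + if l = k then u else 0 := by
  have h0 := hasse_zero k u
  unfold hasse at h0 ⊢
  rw [map_mul, map_pow, taylorAt_X, add_pow_char, add_mul, ← Polynomial.C_pow,
    Polynomial.coeff_add, Polynomial.coeff_C_mul]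
  split_ifs
  · rw [mul_comm (Polynomial.X ^ p), Polynomial.coeff_mul_X_pow', if_pos le_rfl, Nat.sub_self, h0]
  · simp [(Fact.out : p.Prime).ne_zero]

lemma natDegree_taylorAt_monomial (k : ι) (A : ι →₀ ℕ) :
    (taylorAt k (monomial A (1 : F))).natDegree ≤ A k := by
  rw [monomial_eq, map_mul, taylorAt_C, Finsupp.prod, map_prod]
  simp only [map_pow, taylorAt_X]
  refine (Polynomial.natDegree_C_mul_le _ _).trans ((Polynomial.natDegree_prod_le _ _).trans ?_)
  calc _ ≤ ∑ l ∈ A.support, if l = k then A k else 0 := by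
        refine Finset.sum_le_sum fun l _ => ?_
        split_ifs with h
        · subst h
          refine Polynomial.natDegree_pow_le.trans ?_
          rw [add_comm, Polynomial.natDegree_X_add_C, mul_one]
        · rw [add_zero, ← Polynomial.C_pow, Polynomial.natDegree_C]
    _ ≤ A k := by
        rw [Finset.sum_ite_eq']; split_ifs <;> simp

lemma hasse_monomial_eq_zero (k : ι) (A : ι →₀ ℕ) {i : ℕ} (h : A k < i) :
    hasse k i (monomial A (1 : F)) = 0 :=
  Polynomial.coeff_eq_zero_of_natDegree_lt ((natDegree_taylorAt_monomial k A).trans_lt h)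

end Taylor

/-! ### From polynomials to truncated polynomials -/

section Transfer

open MvPolynomial

variable {F : Type*} [Field F] {p m : ℕ} [CharP F p]

/-- The Poisson bracket on the untruncated polynomial ring. -/
def poisson (f g : MvPolynomial (Fin (2 * m)) F) : MvPolynomial (Fin (2 * m)) F :=
  ∑ j, sg F m j • (pderiv j f * pderiv (cj m j) g)

/-- The first index of the `i`-th conjugate pair; the second one is `cj m (fstIdx i)`. -/
def fstIdx (i : Fin m) : Fin (2 * m) := ⟨i, by omega⟩

lemma val_cj_fstIdx (i : Fin m) : (cj m (fstIdx i) : ℕ) = i + m := by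
  simp [cj, fstIdx]

lemma fstIdx_ne_cj (i j : Fin m) : fstIdx i ≠ cj m (fstIdx j) := fun h => by
  have := congrArg Fin.val h
  rw [val_cj_fstIdx] at this
  simp only [fstIdx] at this
  omega

lemma fstIdx_ne {i j : Fin m} (h : i ≠ j) : fstIdx i ≠ fstIdx j := fun h' =>
  h (Fin.ext (by simpa [fstIdx] using congrArg Fin.val h'))

lemma cj_fstIdx_ne {i j : Fin m} (h : i ≠ j) : cj m (fstIdx i) ≠ cj m (fstIdx j) := fun h' =>
  h (Fin.ext (by simpa [val_cj_fstIdx] using congrArg Fin.val h'))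

lemma cj_cj (j : Fin (2 * m)) : cj m (cj m j) = j := by
  have := j.isLt
  by_cases h : (j : ℕ) < m
  · ext; simp [cj, h]
  · have h2 : (j : ℕ) - m < m := by omega
    ext; simp [cj, h, h2]; omega

lemma poisson_eq_sum_pairD (f g : MvPolynomial (Fin (2 * m)) F) :
    poisson f g = ∑ i : Fin m, pairD (fstIdx i) (cj m (fstIdx i)) f g := by
  have h1 (i : Fin m) : finCongr (two_mul m).symm (Fin.castAdd m i) = fstIdx i := rfl
  have h2 (i : Fin m) : finCongr (two_mul m).symm (Fin.natAdd m i) = cj m (fstIdx i) := by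
    ext; rw [val_cj_fstIdx]; simp [add_comm]
  have h3 (i : Fin m) : sg F m (fstIdx i) = 1 := by simp [sg, fstIdx]
  have h4 (i : Fin m) : sg F m (cj m (fstIdx i)) = -1 := by simp [sg, val_cj_fstIdx]
  rw [poisson, ← (finCongr (two_mul m).symm).sum_comp, Fin.sum_univ_add, ← Finset.sum_add_distrib]
  refine Finset.sum_congr rfl fun i _ => ?_
  rw [h1, h2, h3, h4, cj_cj, pairD_apply]
  simp [sub_eq_add_neg]

/-- The quotient map from polynomials to truncated polynomials. -/
abbrev tq (F : Type*) [Field F] (p n : ℕ) : MvPolynomial (Fin n) F →+* TruncP F p n :=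
  Ideal.Quotient.mk (truncIdeal F p n)

lemma tq_smul {n : ℕ} (c : F) (u : MvPolynomial (Fin n) F) : tq F p n (c • u) = c • tq F p n u :=
  rfl

lemma tq_X_pow {n : ℕ} (l : Fin n) : tq F p n (X l ^ p) = 0 :=
  Ideal.Quotient.eq_zero_iff_mem.2 (Ideal.subset_span ⟨l, rfl⟩)

lemma Dj_tq {n : ℕ} (j : Fin n) (u : MvPolynomial (Fin n) F) :
    Dj F p n j (tq F p n u) = tq F p n (pderiv j u) :=
  DjL_mk F p n j u

lemma DHH_tq (f g : MvPolynomial (Fin (2 * m)) F) :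
    DHH F p m (tq F p _ f) (tq F p _ g) = tq F p _ (poisson f g) := by
  simp only [DHH, Dj_tq, poisson, map_sum, tq_smul, map_mul]

lemma DHH_add_right (x y z : TruncP F p (2 * m)) :
    DHH F p m x (y + z) = DHH F p m x y + DHH F p m x z := by
  simp only [DHH, map_add, mul_add, smul_add, Finset.sum_add_distrib]

lemma DHH_add_left (x y z : TruncP F p (2 * m)) :
    DHH F p m (x + y) z = DHH F p m x z + DHH F p m y z := by
  simp only [DHH, map_add, add_mul, smul_add, Finset.sum_add_distrib]

lemma DHH_smul_right (c : F) (x y : TruncP F p (2 * m)) :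
    DHH F p m x (c • y) = c • DHH F p m x y := by
  simp only [DHH, Derivation.map_smul, mul_smul_comm, Finset.smul_sum, smul_comm c]

lemma DHH_smul_left (c : F) (x y : TruncP F p (2 * m)) :
    DHH F p m (c • x) y = c • DHH F p m x y := by
  simp only [DHH, Derivation.map_smul, smul_mul_assoc, Finset.smul_sum, smul_comm c]

lemma DHH_one_right (x : TruncP F p (2 * m)) : DHH F p m x 1 = 0 := by
  simp [DHH, Derivation.map_one_eq_zero]

lemma DHH_one_left (x : TruncP F p (2 * m)) : DHH F p m 1 x = 0 := by
  simp [DHH, Derivation.map_one_eq_zero]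

lemma DHH_zero_right (x : TruncP F p (2 * m)) : DHH F p m x 0 = 0 := by simp [DHH]

lemma DHH_zero_left (x : TruncP F p (2 * m)) : DHH F p m 0 x = 0 := by simp [DHH]

lemma hasse_poisson (k : Fin (2 * m)) (i : ℕ) (f g : MvPolynomial (Fin (2 * m)) F) :
    hasse k i (poisson f g) =
      ∑ a ∈ Finset.HasAntidiagonal.antidiagonal i, poisson (hasse k a.1 f) (hasse k a.2 g) := by
  simp only [poisson, hasse_sum, hasse_smul, hasse_mul, pderiv_hasse, Finset.smul_sum]
  exact Finset.sum_comm

/-- `hasse k p` modulo the truncation ideal: the coefficient of `ε` when a polynomial is read in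
`A(n)[ε]` with multiplication deformed by `x_k ^ p = ε`, `ε ^ 2 = 0`. -/
def epsCoeff (p : ℕ) (k : Fin (2 * m)) (u : MvPolynomial (Fin (2 * m)) F) : TruncP F p (2 * m) :=
  tq F p _ (hasse k p u)

/-- The `ε`-linear part of the Poisson bracket of the deformed algebra: besides the two terms in
which one argument contributes its own `ε`-part there is the sum that is a multiple of `Sq(x_h)`,
where `k` is the index conjugate to `h`; see `SqE_DHH_tq`. -/
lemma epsCoeff_poisson [Fact p.Prime] (k : Fin (2 * m)) (f g : MvPolynomial (Fin (2 * m)) F) :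
    epsCoeff p k (poisson f g) =
      DHH F p m (tq F p _ f) (epsCoeff p k g) + DHH F p m (epsCoeff p k f) (tq F p _ g) +
      ∑ i ∈ Finset.Ioo 0 p,
        DHH F p m (tq F p _ (hasse k i f)) (tq F p _ (hasse k (p - i) g)) := by
  obtain ⟨r, rfl⟩ : ∃ r, p = r + 1 := ⟨p - 1, by have := (Fact.out : p.Prime).pos; omega⟩
  have hI : Finset.Ioo 0 (r + 1) = Finset.Ico 1 (r + 1) := rfl
  rw [epsCoeff, hasse_poisson, Finset.Nat.sum_antidiagonal_eq_sum_range_succ_mk,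
    Finset.sum_range_succ, Finset.range_eq_Ico, Finset.sum_eq_sum_Ico_succ_bot (Nat.succ_pos r), hI]
  simp only [map_add, map_sum, DHH_tq, epsCoeff, hasse_zero, Nat.sub_zero, Nat.sub_self]
  abel

lemma tq_monomial_single {n : ℕ} (h : Fin n) : xpow F p n (Pi.single h 1) = tq F p n (X h) := by
  rw [xpow, X]
  congr 2
  rw [Finsupp.equivFunOnFinite_symm_single]

lemma DHH_X (h : Fin (2 * m)) (u : MvPolynomial (Fin (2 * m)) F) :
    DHH F p m (xpow F p (2 * m) (Pi.single h 1)) (tq F p _ u) =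
      sg F m h • tq F p _ (pderiv (cj m h) u) := by
  rw [tq_monomial_single, DHH_tq, poisson, Finset.sum_eq_single h]
  · simp [tq_smul]
  · intro j _ hj
    rw [pderiv_X_of_ne hj.symm]; simp
  · simp

lemma iterate_DHH_X (h : Fin (2 * m)) (i : ℕ) (u : MvPolynomial (Fin (2 * m)) F) :
    (fun y => DHH F p m (xpow F p (2 * m) (Pi.single h 1)) y)^[i] (tq F p _ u) =
      (sg F m h ^ i * (Nat.factorial i : ℕ)) • tq F p _ (hasse (cj m h) i u) := by
  rw [mul_smul, ← tq_smul _ (hasse _ _ _), factorial_smul_hasse]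
  induction i with
  | zero => simp
  | succ i ih =>
    rw [Function.iterate_succ_apply', ih, DHH_smul_right, DHH_X, Function.iterate_succ_apply',
      smul_smul, pow_succ]

lemma SqE_DHH_tq [Fact p.Prime] (h : Fin (2 * m)) (f g : MvPolynomial (Fin (2 * m)) F) :
    SqE F p (DHH F p m) (xpow F p (2 * m) (Pi.single h 1)) (tq F p _ f) (tq F p _ g) =
      sg F m h ^ p • ∑ i ∈ Finset.Ioo 0 p,
        DHH F p m (tq F p _ (hasse (cj m h) i f)) (tq F p _ (hasse (cj m h) (p - i) g)) := by
  rw [SqE, Squaring, Finset.smul_sum]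
  refine Finset.sum_congr rfl fun i hi => ?_
  rw [Finset.mem_Ioo] at hi
  have hf (j : ℕ) (hj : j < p) : ((Nat.factorial j : ℕ) : F) ≠ 0 := by
    rw [Ne, CharP.cast_eq_zero_iff F p, (Fact.out : p.Prime).dvd_factorial]; omega
  rw [iterate_DHH_X, iterate_DHH_X, DHH_smul_left, DHH_smul_right, smul_smul, smul_smul]
  congr 1
  have h1 := hf i hi.2
  have h2 := hf (p - i) (by omega)
  conv_rhs => rw [← Nat.add_sub_cancel' hi.2.le, pow_add]
  push_cast
  field_simp

/-- The Hochschild sum of the squaring is the `ε`-coefficient of the iterated bracket. -/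
lemma sum_iterate_SqE [Fact p.Prime] (h : Fin (2 * m)) {f v : MvPolynomial (Fin (2 * m)) F}
    (hf : epsCoeff p (cj m h) f = 0) (hv : epsCoeff p (cj m h) v = 0) (r : ℕ) :
    ∑ j ∈ Finset.range r, (fun z => DHH F p m (tq F p _ f) z)^[j]
      (SqE F p (DHH F p m) (xpow F p (2 * m) (Pi.single h 1)) (tq F p _ f)
        ((fun z => DHH F p m (tq F p _ f) z)^[r - 1 - j] (tq F p _ v))) =
      sg F m h ^ p • epsCoeff p (cj m h) ((poisson f)^[r] v) := by
  have hit (i : ℕ) : (fun z => DHH F p m (tq F p _ f) z)^[i] (tq F p _ v) =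
      tq F p _ ((poisson f)^[i] v) := by
    induction i with
    | zero => rfl
    | succ i ih => rw [Function.iterate_succ_apply', ih, DHH_tq, Function.iterate_succ_apply']
  have hsum (s : Finset ℕ) (g : ℕ → TruncP F p (2 * m)) (x : TruncP F p (2 * m)) :
      ∑ j ∈ s, DHH F p m x (g j) = DHH F p m x (∑ j ∈ s, g j) := by
    classical
    induction s using Finset.induction_on with
    | empty => simp [DHH_zero_right]
    | insert a s ha ih => rw [Finset.sum_insert ha, Finset.sum_insert ha, DHH_add_right, ih]
  induction r with
  | zero => simp [hv]
  | succ r ih =>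
    rw [Finset.sum_range_succ', Function.iterate_succ_apply', epsCoeff_poisson, hf, DHH_zero_left,
      add_zero, smul_add, ← SqE_DHH_tq, ← DHH_smul_right, ← ih, ← hsum]
    congr 1
    · refine Finset.sum_congr rfl fun j _ => ?_
      rw [Function.iterate_succ_apply', show r + 1 - 1 - (j + 1) = r - 1 - j by omega]
    · simp [hit]

end Transfer

/-! ### The `p`-th power of the Hamiltonian derivation of a monomial -/

section Kernel

open MvPolynomial

variable {F : Type*} [Field F] {p m : ℕ} [CharP F p] [Fact p.Prime]

/-- The exponent of the product of the `i`-th conjugate pair. -/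
def pairExp (i : Fin m) : Fin (2 * m) →₀ ℕ :=
  Finsupp.single (fstIdx i) 1 + Finsupp.single (cj m (fstIdx i)) 1

lemma X_mul_X_eq (i : Fin m) :
    (X (fstIdx i) * X (cj m (fstIdx i)) : MvPolynomial (Fin (2 * m)) F) =
      monomial (pairExp i) 1 := by
  rw [X, X, monomial_mul, one_mul, pairExp]

lemma poisson_pair (i : Fin m) (v : MvPolynomial (Fin (2 * m)) F) :
    poisson (monomial (pairExp i) 1) v =
      pairD (fstIdx i) (cj m (fstIdx i)) (X (fstIdx i) * X (cj m (fstIdx i))) v := by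
  rw [poisson_eq_sum_pairD, Finset.sum_eq_single i, X_mul_X_eq]
  · intro j _ hj
    rw [← X_mul_X_eq, pairD_apply, Derivation.leibniz, Derivation.leibniz,
      pderiv_X_of_ne (fstIdx_ne hj.symm), pderiv_X_of_ne (fstIdx_ne_cj j i).symm,
      pderiv_X_of_ne (fstIdx_ne_cj i j), pderiv_X_of_ne (cj_fstIdx_ne hj.symm)]
    simp
  · simp

/-- `D_f ^ p` for a monomial `f`: the pair derivations commute, so Frobenius is additive on them. -/
lemma iterate_poisson_prime (A : Fin (2 * m) →₀ ℕ) (v : MvPolynomial (Fin (2 * m)) F) :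
    (poisson (monomial A 1))^[p] v = ∑ i : Fin m,
      ((pairD (fstIdx i) (cj m (fstIdx i)) (monomial A (1 : F)) :
        Module.End F (MvPolynomial (Fin (2 * m)) F)) ^ p) v := by
  have : CharP (Module.End F (MvPolynomial (Fin (2 * m)) F)) p :=
    charP_of_injective_algebraMap (FaithfulSMul.algebraMap_injective F _) p
  have hfun : poisson (monomial A (1 : F)) = ⇑(∑ i : Fin m,
      (pairD (fstIdx i) (cj m (fstIdx i)) (monomial A (1 : F)) :
        Module.End F (MvPolynomial (Fin (2 * m)) F))) := by
    funext w
    rw [poisson_eq_sum_pairD, LinearMap.sum_apply]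
    rfl
  rw [hfun, ← Module.End.pow_apply, sum_pow_char_of_commute p, LinearMap.sum_apply]
  intro i _ j _
  by_cases hij : i = j
  · subst hij; exact Commute.refl _
  · exact pairD_commute (fstIdx_ne hij) (fstIdx_ne_cj i j) (fstIdx_ne_cj j i).symm
      (cj_fstIdx_ne hij) A

/-- The product of a conjugate pair is toral: this is why its `p`-power is itself. -/
lemma iterate_poisson_pair (i : Fin m) (v : MvPolynomial (Fin (2 * m)) F) :
    (poisson (monomial (pairExp i) 1))^[p] v = poisson (monomial (pairExp i) 1) v := by
  rw [iterate_poisson_prime, Finset.sum_eq_single i]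
  · have h1 : pairExp i (fstIdx i) = 1 := by simp [pairExp, (fstIdx_ne_cj i i).symm]
    have h2 : pairExp i (cj m (fstIdx i)) = 1 := by simp [pairExp, fstIdx_ne_cj i i]
    rw [pairD_pow_eq_mul p (fstIdx_ne_cj i i) (h1.trans h2.symm), poisson_pair, h1, pairExp,
      tsub_self]
    simp
  · intro j _ hj
    have h1 : pairExp i (fstIdx j) = 0 := by
      simp [pairExp, fstIdx_ne hj.symm, (fstIdx_ne_cj j i).symm]
    have h2 : pairExp i (cj m (fstIdx j)) = 0 := by
      simp [pairExp, fstIdx_ne_cj i j, cj_fstIdx_ne hj.symm]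
    rw [pairD_pow_eq_mul p (fstIdx_ne_cj j j) (h1.trans h2.symm), h1]
    simp
  · simp

lemma epsCoeff_X_pow_mul (k l : Fin (2 * m)) (u : MvPolynomial (Fin (2 * m)) F) :
    epsCoeff p k (X l ^ p * u) = if l = k then tq F p _ u else 0 := by
  rw [epsCoeff, hasse_X_pow_mul, map_add, map_mul, tq_X_pow, zero_mul, zero_add]
  split_ifs <;> simp

lemma monomial_eq_X_mul {ι : Type*} {B : ι →₀ ℕ} {l : ι} (h : B l ≠ 0) :
    monomial B (1 : F) = X l * monomial (B - Finsupp.single l 1) 1 := by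
  rw [X, monomial_mul, one_mul, add_comm, Finsupp.sub_add_single_one_cancel h]

/-- In the deformed algebra the `p`-th power of a nontrivial monomial vanishes, except for
`x_k ^ p = ε`. -/
lemma epsCoeff_monomial_pow_mul (k : Fin (2 * m)) {B : Fin (2 * m) →₀ ℕ} (hB : B ≠ 0)
    (u : MvPolynomial (Fin (2 * m)) F) :
    epsCoeff p k (monomial B 1 ^ p * u) =
      if B = Finsupp.single k 1 then tq F p _ u else 0 := by
  by_cases h : ∃ l, l ≠ k ∧ B l ≠ 0
  · obtain ⟨l, hl, hBl⟩ := h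
    have : B ≠ Finsupp.single k 1 := by
      rintro rfl; simp [hl] at hBl
    rw [monomial_eq_X_mul hBl, mul_pow, mul_assoc, epsCoeff_X_pow_mul, if_neg hl, if_neg this]
  · push Not at h
    have hk : B k ≠ 0 := fun hk => hB <| Finsupp.ext fun l => by
      by_cases hl : l = k
      · rw [hl]; exact hk
      · exact h l hl
    rw [monomial_eq_X_mul hk, mul_pow, mul_assoc, epsCoeff_X_pow_mul, if_pos rfl]
    split_ifs with h1
    · rw [h1, tsub_self]; simp
    · have h2 : (B - Finsupp.single k 1 : Fin (2 * m) →₀ ℕ) k ≠ 0 := by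
        intro h2
        refine h1 (Finsupp.ext fun l => ?_)
        by_cases hl : l = k
        · subst hl; simp at h2 ⊢; omega
        · rw [h l hl, Finsupp.single_apply, if_neg (Ne.symm hl)]
      rw [monomial_eq_X_mul h2, mul_pow, map_mul, map_mul, tq_X_pow, zero_mul, zero_mul]

/-- The `p`-th power of one pair derivation of a monomial `f ≠ x_i x_{i'}` has as `ε`-coefficient a
multiple of the bracket with `x_i x_{i'}`. -/
lemma exists_epsCoeff_pairD_pow (k : Fin (2 * m)) (i : Fin m) {A : Fin (2 * m) →₀ ℕ}
    (hA : ∀ j, A j < p) (hne : A ≠ pairExp i) :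
    ∃ c : F, ∀ v, epsCoeff p k
      (((pairD (fstIdx i) (cj m (fstIdx i)) (monomial A (1 : F)) :
        Module.End F (MvPolynomial (Fin (2 * m)) F)) ^ p) v) =
        c • tq F p _ (poisson (monomial (pairExp i) 1) v) := by
  have hxy := fstIdx_ne_cj i i
  by_cases h : A (fstIdx i) = A (cj m (fstIdx i))
  · by_cases h0 : A (fstIdx i) = 0
    · refine ⟨0, fun v => ?_⟩
      rw [pairD_pow_eq_mul p hxy h, h0]
      simp [epsCoeff, hasse]
    · have hB : A - pairExp i ≠ 0 := by
        intro hB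
        refine hne (le_antisymm (tsub_eq_zero_iff_le.1 hB) fun j => ?_)
        simp only [pairExp, Finsupp.add_apply, Finsupp.single_apply]
        split_ifs with h1 h2 h2
        · exact absurd (h1.trans h2.symm) hxy
        · subst h1; omega
        · rw [← h2, ← h]; omega
        · omega
      refine ⟨A (fstIdx i) * if A - pairExp i = Finsupp.single k 1 then 1 else 0, fun v => ?_⟩
      rw [pairD_pow_eq_mul p hxy h, epsCoeff, hasse_smul, tq_smul, ← epsCoeff, ← pairExp,
        epsCoeff_monomial_pow_mul k hB, poisson_pair, mul_smul]
      split_ifs <;> simp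
  · refine ⟨0, fun v => ?_⟩
    rw [pairD_pow_eq_zero p hxy (hA _) (hA _) h]
    simp [epsCoeff, hasse]

/-- Every truncated polynomial has a lift without `ε`-part, namely its reduced representative. -/
lemma exists_tq_eq (k : Fin (2 * m)) (y : TruncP F p (2 * m)) :
    ∃ v, tq F p _ v = y ∧ epsCoeff p k v = 0 := by
  obtain ⟨u, rfl⟩ := Ideal.Quotient.mk_surjective y
  induction u using MvPolynomial.induction_on' with
  | monomial B c =>
    have hc : monomial B c = c • monomial B (1 : F) := by rw [smul_monomial, smul_eq_mul, mul_one]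
    by_cases h : B k < p
    · refine ⟨monomial B c, rfl, ?_⟩
      rw [epsCoeff, hc, hasse_smul, hasse_monomial_eq_zero k B h]; simp
    · refine ⟨0, ?_, by simp [epsCoeff, hasse]⟩
      have : monomial B c = X k ^ p * monomial (B - Finsupp.single k p) c := by
        rw [X_pow_eq_monomial, monomial_mul, one_mul, add_tsub_cancel_of_le]
        simpa using h
      rw [this, map_mul, tq_X_pow, zero_mul, map_zero]
  | add u w hu hw =>
    obtain ⟨u', hu, hu'⟩ := hu
    obtain ⟨w', hw, hw'⟩ := hw
    refine ⟨u' + w', by rw [map_add, hu, hw, map_add], ?_⟩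
    rw [epsCoeff, hasse_add, map_add, ← epsCoeff, ← epsCoeff, hu', hw', add_zero]

end Kernel

/-! ### Constant terms -/

section Constants

variable {F : Type*} [Field F] {p m : ℕ} [CharP F p]

/-- Removal of the constant term, i.e. passage to the quotient by the central element `1`. -/
def dropC (F : Type*) [Field F] (p n : ℕ) : TruncP F p n →ₗ[F] TruncP F p n :=
  LinearMap.id - (coeffT F p n fun _ => 0).smulRight 1

lemma dropC_apply {n : ℕ} (x : TruncP F p n) :
    dropC F p n x = x - coeffT F p n (fun _ => 0) x • (1 : TruncP F p n) := rfl

lemma Hbr_eq_dropC (x y : TruncP F p (2 * m)) :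
    Hbr F p m x y = dropC F p _ (DHH F p m x y) := rfl

lemma dropC_one {n : ℕ} [Fact p.Prime] : dropC F p n (1 : TruncP F p n) = 0 := by
  have h1 : coeffT F p n (fun _ => 0) 1 = 1 := by
    rw [coeffT, dif_pos fun _ => (Fact.out : p.Prime).pos,
      ← map_one (Ideal.Quotient.mk (truncIdeal F p n)), liftF_mk]
    have h0 : Finsupp.equivFunOnFinite.symm (fun _ : Fin n => 0) = 0 := by ext; rfl
    change MvPolynomial.coeff (Finsupp.equivFunOnFinite.symm (fun _ : Fin n => 0))
      (1 : MvPolynomial (Fin n) F) = 1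
    rw [h0, MvPolynomial.coeff_zero_one]
  rw [dropC_apply, h1, one_smul, sub_self]

lemma dropC_dropC {n : ℕ} [Fact p.Prime] (x : TruncP F p n) :
    dropC F p n (dropC F p n x) = dropC F p n x := by
  rw [dropC_apply x, map_sub, map_smul, dropC_one, smul_zero, sub_zero, ← dropC_apply]

lemma DHH_congr {x x' y y' : TruncP F p (2 * m)} (hx : dropC F p _ x = dropC F p _ x')
    (hy : dropC F p _ y = dropC F p _ y') : DHH F p m x y = DHH F p m x' y' := by
  have hs (z : TruncP F p (2 * m)) : z = dropC F p _ z + coeffT F p _ (fun _ => 0) z • 1 := by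
    rw [dropC_apply]; abel
  have hr (a z : TruncP F p (2 * m)) : DHH F p m a z = DHH F p m a (dropC F p _ z) := by
    conv_lhs => rw [hs z, DHH_add_right, DHH_smul_right, DHH_one_right, smul_zero, add_zero]
  have hl (a z : TruncP F p (2 * m)) : DHH F p m z a = DHH F p m (dropC F p _ z) a := by
    conv_lhs => rw [hs z, DHH_add_left, DHH_smul_left, DHH_one_left, smul_zero, add_zero]
  rw [hr, hl, hx, hy, ← hl, ← hr]

lemma dropC_iterate_Hbr [Fact p.Prime] (z : TruncP F p (2 * m)) {y y' : TruncP F p (2 * m)}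
    (hy : dropC F p _ y = dropC F p _ y') (i : ℕ) :
    dropC F p _ ((fun w => Hbr F p m z w)^[i] y) =
      dropC F p _ ((fun w => DHH F p m z w)^[i] y') := by
  induction i with
  | zero => exact hy
  | succ i ih =>
    rw [Function.iterate_succ_apply', Function.iterate_succ_apply', Hbr_eq_dropC, dropC_dropC,
      DHH_congr rfl ih]

/-- The truncated bracket `Hbr` differs from `DHH` by constants only, which `DHH` annihilates. -/
lemma SqE_Hbr [Fact p.Prime] (z x : TruncP F p (2 * m)) {y y' : TruncP F p (2 * m)}
    (hy : dropC F p _ y = dropC F p _ y') :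
    SqE F p (Hbr F p m) z x y = dropC F p _ (SqE F p (DHH F p m) z x y') := by
  rw [SqE, SqE, Squaring, Squaring, map_sum]
  refine Finset.sum_congr rfl fun i _ => ?_
  rw [map_smul, Hbr_eq_dropC,
    DHH_congr (dropC_iterate_Hbr z rfl i) (dropC_iterate_Hbr z hy (p - i))]

/-- Removing constant terms commutes with the formation of the Hochschild operator. -/
lemma HOp_Hbr [Fact p.Prime] (z x xp y : TruncP F p (2 * m)) :
    HOp p (Hbr F p m) (SqE F p (Hbr F p m) z) x xp y =
      dropC F p _ (HOp p (DHH F p m) (SqE F p (DHH F p m) z) x xp y) := by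
  rw [HOp, HOp, map_sub, map_sum, SqE_Hbr z xp rfl]
  congr 1
  refine Finset.sum_congr rfl fun j _ => ?_
  have h := SqE_Hbr z x (dropC_iterate_Hbr x (rfl : dropC F p _ y = _) (p - 1 - j))
  rw [← dropC_iterate_Hbr x ((congrArg (dropC F p _) h).trans (dropC_dropC _)) j]
  rcases j with _ | j
  · simp only [Function.iterate_zero, id] at h ⊢
    rw [h, dropC_dropC]
  · rw [Function.iterate_succ_apply', Hbr_eq_dropC, dropC_dropC]

end Constants

/-! ### The Hochschild operator of a monomial -/

section Assembly

open MvPolynomial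

variable {F : Type*} [Field F] {p m : ℕ} [CharP F p] [Fact p.Prime]

lemma HOp_DHH_tq (h : Fin (2 * m)) {A : Fin (2 * m) →₀ ℕ} (hA : ∀ j, A j < p)
    {v : MvPolynomial (Fin (2 * m)) F} (hv : epsCoeff p (cj m h) v = 0)
    (xp : TruncP F p (2 * m)) :
    HOp p (DHH F p m) (SqE F p (DHH F p m) (xpow F p (2 * m) (Pi.single h 1)))
      (tq F p _ (monomial A 1)) xp (tq F p _ v) =
    sg F m h ^ p • epsCoeff p (cj m h) ((poisson (monomial A 1))^[p] v) -
      SqE F p (DHH F p m) (xpow F p (2 * m) (Pi.single h 1)) xp (tq F p _ v) := by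
  have hf : epsCoeff p (cj m h) (monomial A (1 : F)) = 0 := by
    rw [epsCoeff, hasse_monomial_eq_zero _ _ (hA _), map_zero]
  rw [HOp, sum_iterate_SqE h hf hv]

/-- For `f = x_i x_{i'}` both terms of the Hochschild operator are the `ε`-coefficient of
`D_f ^ p v = D_f v`, so they cancel. -/
lemma HOp_pair (h : Fin (2 * m)) (i : Fin m) (hA : ∀ j, pairExp i j < p)
    (y : TruncP F p (2 * m)) :
    HOp p (DHH F p m) (SqE F p (DHH F p m) (xpow F p (2 * m) (Pi.single h 1)))
      (tq F p _ (monomial (pairExp i) 1)) (tq F p _ (monomial (pairExp i) 1)) y = 0 := by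
  obtain ⟨v, rfl, hv⟩ := exists_tq_eq (cj m h) y
  rw [HOp_DHH_tq h hA hv, SqE_DHH_tq, iterate_poisson_pair, epsCoeff_poisson, hv,
    epsCoeff, hasse_monomial_eq_zero _ _ (hA _), map_zero, DHH_zero_left, DHH_zero_right,
    zero_add, zero_add, sub_self]

lemma HOp_not_pair (h : Fin (2 * m)) {A : Fin (2 * m) →₀ ℕ} (hA : ∀ j, A j < p)
    (hne : ∀ i, A ≠ pairExp i) :
    ∃ c : Fin m → F, ∀ y, HOp p (DHH F p m)
      (SqE F p (DHH F p m) (xpow F p (2 * m) (Pi.single h 1))) (tq F p _ (monomial A 1)) 0 y =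
        DHH F p m (∑ i, c i • tq F p _ (monomial (pairExp i) 1)) y := by
  choose c hc using fun i => exists_epsCoeff_pairD_pow (F := F) (cj m h) i hA (hne i)
  refine ⟨fun i => sg F m h ^ p * c i, fun y => ?_⟩
  obtain ⟨v, rfl, hv⟩ := exists_tq_eq (cj m h) y
  have hp0 : SqE F p (DHH F p m) (xpow F p (2 * m) (Pi.single h 1)) 0 (tq F p _ v) = 0 := by
    rw [← map_zero (tq F p (2 * m)), SqE_DHH_tq]
    simp [hasse, DHH_zero_left]
  have hsum (s : Finset (Fin m)) (g : Fin m → TruncP F p (2 * m)) (x : TruncP F p (2 * m)) :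
      DHH F p m (∑ j ∈ s, g j) x = ∑ j ∈ s, DHH F p m (g j) x := by
    classical
    induction s using Finset.induction_on with
    | empty => simp [DHH_zero_left]
    | insert a s ha ih => rw [Finset.sum_insert ha, Finset.sum_insert ha, DHH_add_left, ih]
  rw [HOp_DHH_tq h hA hv, hp0, sub_zero, iterate_poisson_prime, hsum, epsCoeff, hasse_sum, map_sum,
    Finset.smul_sum]
  refine Finset.sum_congr rfl fun i _ => ?_
  rw [← epsCoeff, hc, DHH_smul_left, DHH_tq, mul_smul]

lemma equivFunOnFinite_symm_pair (i : Fin m) :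
    Finsupp.equivFunOnFinite.symm
      (Pi.single (fstIdx i) 1 + Pi.single (cj m (fstIdx i)) 1 : Fin (2 * m) → ℕ) = pairExp i := by
  classical
  ext j
  simp [pairExp, Finsupp.single_apply, Pi.single_apply, eq_comm]

lemma tq_pair_mem_Hsub (hp5 : 5 ≤ p) (i : Fin m) :
    tq F p _ (monomial (pairExp i) 1) ∈ Hsub F p m := by
  have h1 : ∀ j, pairExp i j ≤ 1 := fun j => by
    simp only [pairExp, Finsupp.add_apply, Finsupp.single_apply]
    have := fstIdx_ne_cj i i
    split_ifs with h1 h2 <;> simp_all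
  have h2 : pairExp i (fstIdx i) = 1 := by simp [pairExp, (fstIdx_ne_cj i i).symm]
  refine Submodule.subset_span ⟨pairExp i, fun j => by have := h1 j; omega, fun h => ?_, fun h => ?_,
    ?_⟩
  · rw [h] at h2; simp at h2
  · rw [h] at h2; simp at h2; omega
  · rw [xpow, Finsupp.equivFunOnFinite_symm_coe]

end Assembly

/-- For every `1 ≤ h ≤ n = 2m` and every monomial `x^a ∈ H(n)`, the map
`H_{Sq(x_h)}(x^a)` is an inner derivation of the Hamiltonian algebra `H(n)`
(with `(x^a)^{[p]} = x^a` if `x^a = x_i x_{i'}` for some `i ≤ m`, `0` otherwise). -/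
theorem hamiltonian_sq_HOp_inner
    (p m : ℕ) (hp : p.Prime) (hp5 : 5 ≤ p) (hm : 1 ≤ m)
    (F : Type*) [Field F] [IsAlgClosed F] [CharP F p] :
    ∀ h : Fin (2 * m), ∀ a : Fin (2 * m) → ℕ,
      (∀ i, a i < p) → a ≠ (fun _ => 0) → a ≠ (fun _ => p - 1) →
      IsInnerOn F (Hsub F p m) (Hbr F p m)
        (HOp p (Hbr F p m)
          (SqE F p (Hbr F p m) (xpow F p (2 * m) (Pi.single h 1)))
          (xpow F p (2 * m) a) (HpPow F p m a)) := by
  classical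
  intro h a ha _ _
  have : Fact p.Prime := ⟨hp⟩
  have hA : ∀ j, (Finsupp.equivFunOnFinite.symm a) j < p := ha
  have hx : xpow F p (2 * m) a =
      tq F p (2 * m) (MvPolynomial.monomial (Finsupp.equivFunOnFinite.symm a) 1) := rfl
  by_cases hpair : ∃ i : Fin m, Finsupp.equivFunOnFinite.symm a = pairExp i
  · obtain ⟨i, hi⟩ := hpair
    have hpow : HpPow F p m a = xpow F p (2 * m) a := by
      rw [HpPow, if_pos]
      refine ⟨fstIdx i, i.isLt, ?_⟩
      rw [← equivFunOnFinite_symm_pair] at hi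
      exact Finsupp.equivFunOnFinite.symm.injective hi
    refine ⟨0, Submodule.zero_mem _, fun y _ => ?_⟩
    rw [HOp_Hbr, Hbr_eq_dropC, DHH_zero_left, hpow, hx, hi, HOp_pair h i (hi ▸ hA)]
  · push Not at hpair
    have hpow : HpPow F p m a = 0 := by
      rw [HpPow, if_neg]
      rintro ⟨j, hj, rfl⟩
      exact hpair ⟨j, hj⟩ (equivFunOnFinite_symm_pair ⟨j, hj⟩)
    obtain ⟨c, hc⟩ := HOp_not_pair (F := F) h hA hpair
    refine ⟨∑ i, c i • tq F p (2 * m) (MvPolynomial.monomial (pairExp i) 1),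
      Submodule.sum_mem _ fun i _ => Submodule.smul_mem _ (c i) (tq_pair_mem_Hsub hp5 i),
      fun y _ => ?_⟩
    rw [HOp_Hbr, Hbr_eq_dropC, hpow, hx, hc]
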